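/- arXiv:0707.1893 — 6 statements merged into one kernel-verified Lean document; each statement's English description precedes it below -/
import Mathlib

section
/- Let Φ, G : ℝ^{n+1} → ℝ be C² functions and let x ∈ ℝ^{n+1} be a point with Φ(x) = 0 and ∇Φ(x) ≠ 0 and G(x) ≠ 0. Define A_mcurv(Φ) = -ΔΦ + ⟨∇Φ, (Hess Φ)(∇Φ)⟩ / ‖∇Φ‖², where ΔΦ = Σ_a ∂_a∂_aΦ and Hess Φ is the Hessian. Then A_mcurv(G·Φ)(x) = G(x) · A_mcurv(Φ)(x); that is, A_mcurv is a dual density on the hypersurface {Φ = 0}. -/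
noncomputable section

/-- The partial derivative `∂ₐΦ(x)`. -/
def pderiv1 {m : ℕ} (Φ : EuclideanSpace ℝ (Fin m) → ℝ)
    (x : EuclideanSpace ℝ (Fin m)) (a : Fin m) : ℝ :=
  fderiv ℝ Φ x (EuclideanSpace.single a 1)

/-- The second partial derivative `∂ₐ∂_bΦ(x)`. -/
def pderiv2 {m : ℕ} (Φ : EuclideanSpace ℝ (Fin m) → ℝ)
    (x : EuclideanSpace ℝ (Fin m)) (a b : Fin m) : ℝ :=
  fderiv ℝ (fun y => fderiv ℝ Φ y (EuclideanSpace.single b 1)) x (EuclideanSpace.single a 1)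

/-- The mean-curvature dual density
`A_mcurv(Φ)(x) = -ΔΦ(x) + (Σ_{a,b} ∂ₐΦ ∂_bΦ ∂ₐ∂_bΦ)/(Σ_c (∂_cΦ)²)`. -/
def Amcurv {m : ℕ} (Φ : EuclideanSpace ℝ (Fin m) → ℝ)
    (x : EuclideanSpace ℝ (Fin m)) : ℝ :=
  -(∑ a, pderiv2 Φ x a a) +
    (∑ a, ∑ b, pderiv1 Φ x a * pderiv1 Φ x b * pderiv2 Φ x a b) /
      (∑ c, (pderiv1 Φ x c) ^ 2)

/-- For C² functions `Φ G : ℝ^{n+1} → ℝ` and a point `x` with `Φ x = 0`,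
`∇Φ(x) ≠ 0` and `G x ≠ 0`, the mean-curvature expression `A_mcurv` is a dual density:
`A_mcurv(G·Φ)(x) = G(x) · A_mcurv(Φ)(x)`. -/
theorem stmt1 (n : ℕ) (Φ G : EuclideanSpace ℝ (Fin (n + 1)) → ℝ)
    (hΦ : ContDiff ℝ 2 Φ) (hG : ContDiff ℝ 2 G)
    (x : EuclideanSpace ℝ (Fin (n + 1))) (hx : Φ x = 0)
    (hgrad : gradient Φ x ≠ 0) (hGx : G x ≠ 0) :
    Amcurv (fun y => G y * Φ y) x = G x * Amcurv Φ x := by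
  have dΦ : Differentiable ℝ Φ := hΦ.differentiable (by norm_num)
  have dG : Differentiable ℝ G := hG.differentiable (by norm_num)
  have dΦ' : ∀ v, Differentiable ℝ (fun y => fderiv ℝ Φ y v) := fun v =>
    ((hΦ.fderiv_right (m := 1) (by norm_num)).differentiable (by norm_num)).clm_apply
      (differentiable_const v)
  have dG' : ∀ v, Differentiable ℝ (fun y => fderiv ℝ G y v) := fun v =>
    ((hG.fderiv_right (m := 1) (by norm_num)).differentiable (by norm_num)).clm_apply
      (differentiable_const v)
  have key : ∀ y v, fderiv ℝ (fun y => G y * Φ y) y v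
      = G y * fderiv ℝ Φ y v + Φ y * fderiv ℝ G y v := by
    intro y v
    rw [fderiv_fun_mul (dG y) (dΦ y)]
    simp
  have h1 : ∀ a, pderiv1 (fun y => G y * Φ y) x a = G x * pderiv1 Φ x a := by
    intro a
    simp [pderiv1, key, hx]
  have h2 : ∀ a b, pderiv2 (fun y => G y * Φ y) x a b
      = G x * pderiv2 Φ x a b + pderiv1 G x a * pderiv1 Φ x b
        + pderiv1 Φ x a * pderiv1 G x b := by
    intro a b
    simp only [pderiv2, key, pderiv1]
    rw [fderiv_fun_add ((dG x).fun_mul (dΦ' _ x)) ((dΦ x).fun_mul (dG' _ x)),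
      fderiv_fun_mul (dG x) (dΦ' _ x), fderiv_fun_mul (dΦ x) (dG' _ x)]
    simp [hx]
    ring
  have hS : (∑ c, (pderiv1 Φ x c) ^ 2) ≠ 0 := by
    intro h
    apply hgrad
    have h0 : ∀ c, pderiv1 Φ x c = 0 := by
      intro c
      have := (Finset.sum_eq_zero_iff_of_nonneg (fun i _ => sq_nonneg (pderiv1 Φ x i))).1 h c
        (Finset.mem_univ c)
      exact pow_eq_zero_iff (two_ne_zero) |>.1 this
    have hf : fderiv ℝ Φ x = 0 := by
      apply ContinuousLinearMap.coe_injective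
      apply (EuclideanSpace.basisFun (Fin (n + 1)) ℝ).toBasis.ext
      intro i
      simpa [pderiv1] using h0 i
    simp [gradient, hf]
  have e1 : ∑ a, pderiv2 (fun y => G y * Φ y) x a a
      = G x * ∑ a, pderiv2 Φ x a a + 2 * ∑ a, pderiv1 G x a * pderiv1 Φ x a := by
    rw [Finset.mul_sum, Finset.mul_sum, ← Finset.sum_add_distrib]
    exact Finset.sum_congr rfl fun a _ => by rw [h2]; ring
  have e2 : ∑ c, (pderiv1 (fun y => G y * Φ y) x c) ^ 2
      = G x ^ 2 * ∑ c, (pderiv1 Φ x c) ^ 2 := by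
    rw [Finset.mul_sum]
    exact Finset.sum_congr rfl fun a _ => by rw [h1]; ring
  have e3 : ∑ a, ∑ b, pderiv1 (fun y => G y * Φ y) x a * pderiv1 (fun y => G y * Φ y) x b
        * pderiv2 (fun y => G y * Φ y) x a b
      = G x ^ 2 * (G x * (∑ a, ∑ b, pderiv1 Φ x a * pderiv1 Φ x b * pderiv2 Φ x a b)
        + (∑ a, pderiv1 G x a * pderiv1 Φ x a) * (∑ c, (pderiv1 Φ x c) ^ 2)
        + (∑ c, (pderiv1 Φ x c) ^ 2) * (∑ a, pderiv1 G x a * pderiv1 Φ x a)) := by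
    simp only [Finset.sum_mul_sum]
    simp only [Finset.mul_sum, ← Finset.sum_add_distrib]
    refine Finset.sum_congr rfl fun a _ => Finset.sum_congr rfl fun b _ => ?_
    rw [h1, h1, h2]
    ring
  unfold Amcurv
  rw [e1, e2, e3]
  field_simp
  ring
end
end

section
/- Let Φ, G : ℝ^{n+1} → ℝ be C² functions and let x ∈ ℝ^{n+1} be a point with Φ(x) = 0, ∇Φ(x) ≠ 0, and G(x) ≠ 0. Define the matrix M(Φ)(x) with entries M_{ab}(Φ)(x) = -∂_a∂_bΦ − ∂_aΦ·∂_bΦ·ΔΦ/‖∇Φ‖² + (∂_aΦ·Σ_d ∂_dΦ·∂_d∂_bΦ + ∂_bΦ·Σ_d ∂_dΦ·∂_d∂_aΦ)/‖∇Φ‖², all evaluated at x. Then M_{ab}(G·Φ)(x) = G(x) · M_{ab}(Φ)(x) for all a, b; that is, M is a matrix-valued dual density on the hypersurface {Φ = 0}. -/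
noncomputable section

/-- The matrix-valued dual density
`M_{ab}(Φ) = -∂ₐ∂_bΦ − ∂ₐΦ∂_bΦ·ΔΦ/‖∇Φ‖² + (∂ₐΦ·Σ_d ∂_dΦ∂_d∂_bΦ + ∂_bΦ·Σ_d ∂_dΦ∂_d∂ₐΦ)/‖∇Φ‖²`. -/
def Mmat {m : ℕ} (Φ : EuclideanSpace ℝ (Fin m) → ℝ)
    (x : EuclideanSpace ℝ (Fin m)) : Matrix (Fin m) (Fin m) ℝ :=
  Matrix.of fun a b =>
    -pderiv2 Φ x a b
      - pderiv1 Φ x a * pderiv1 Φ x b * (∑ d, pderiv2 Φ x d d) /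
          (∑ c, (pderiv1 Φ x c) ^ 2)
      + (pderiv1 Φ x a * (∑ d, pderiv1 Φ x d * pderiv2 Φ x d b) +
          pderiv1 Φ x b * (∑ d, pderiv1 Φ x d * pderiv2 Φ x d a)) /
          (∑ c, (pderiv1 Φ x c) ^ 2)

theorem aux_p1 {m : ℕ} (Φ G : EuclideanSpace ℝ (Fin m) → ℝ)
    (hΦ : ContDiff ℝ 2 Φ) (hG : ContDiff ℝ 2 G) (x : EuclideanSpace ℝ (Fin m)) (a : Fin m) :
    pderiv1 (fun y => G y * Φ y) x a = G x * pderiv1 Φ x a + Φ x * pderiv1 G x a := by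
  have h1 : DifferentiableAt ℝ Φ x := (hΦ.differentiable (by norm_num)) x
  have h2 : DifferentiableAt ℝ G x := (hG.differentiable (by norm_num)) x
  unfold pderiv1
  rw [fderiv_fun_mul h2 h1]
  simp

theorem aux_diff {m : ℕ} (Φ : EuclideanSpace ℝ (Fin m) → ℝ)
    (hΦ : ContDiff ℝ 2 Φ) (b : Fin m) :
    Differentiable ℝ (fun y => pderiv1 Φ y b) := by
  have h : ContDiff ℝ 1 (fderiv ℝ Φ) := hΦ.fderiv_right (by norm_num)
  have h' : Differentiable ℝ (fderiv ℝ Φ) := h.differentiable (by norm_num)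
  unfold pderiv1
  fun_prop

theorem aux_p2 {m : ℕ} (Φ G : EuclideanSpace ℝ (Fin m) → ℝ)
    (hΦ : ContDiff ℝ 2 Φ) (hG : ContDiff ℝ 2 G) (x : EuclideanSpace ℝ (Fin m)) (hx : Φ x = 0)
    (a b : Fin m) :
    pderiv2 (fun y => G y * Φ y) x a b = G x * pderiv2 Φ x a b
      + pderiv1 G x a * pderiv1 Φ x b + pderiv1 Φ x a * pderiv1 G x b := by
  have h1 : DifferentiableAt ℝ Φ x := (hΦ.differentiable (by norm_num)) x
  have h2 : DifferentiableAt ℝ G x := (hG.differentiable (by norm_num)) x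
  have e : (fun y => pderiv1 (fun y => G y * Φ y) y b)
      = fun y => G y * pderiv1 Φ y b + Φ y * pderiv1 G y b :=
    funext fun y => aux_p1 Φ G hΦ hG y b
  have k (F : EuclideanSpace ℝ (Fin m) → ℝ) : pderiv2 F x a b
      = fderiv ℝ (fun y => pderiv1 F y b) x (EuclideanSpace.single a 1) := rfl
  have d1 := aux_diff Φ hΦ b x
  have d2 := aux_diff G hG b x
  rw [k, k, e, fderiv_fun_add (h2.fun_mul d1) (h1.fun_mul d2), fderiv_fun_mul h2 d1,
    fderiv_fun_mul h1 d2]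
  simp only [ContinuousLinearMap.add_apply, ContinuousLinearMap.smul_apply, smul_eq_mul, hx]
  have kG : fderiv ℝ G x (EuclideanSpace.single a 1) = pderiv1 G x a := rfl
  have kΦ : fderiv ℝ Φ x (EuclideanSpace.single a 1) = pderiv1 Φ x a := rfl
  rw [kG, kΦ]
  ring

theorem aux_N {m : ℕ} (Φ : EuclideanSpace ℝ (Fin m) → ℝ) (x : EuclideanSpace ℝ (Fin m))
    (hgrad : gradient Φ x ≠ 0) : ∑ c, (pderiv1 Φ x c) ^ 2 ≠ 0 := by
  intro h
  apply hgrad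
  rw [Finset.sum_eq_zero_iff_of_nonneg (fun i _ => sq_nonneg _)] at h
  have h0 : ∀ c, pderiv1 Φ x c = 0 := fun c => by simpa using h c (Finset.mem_univ c)
  ext c
  have : inner ℝ (gradient Φ x) (EuclideanSpace.single c 1) = pderiv1 Φ x c := by
    unfold gradient pderiv1
    exact InnerProductSpace.toDual_symm_apply
  rw [h0, EuclideanSpace.inner_single_right] at this
  simpa using this

/-- For C² functions `Φ G : ℝ^{n+1} → ℝ` and a point `x` with `Φ x = 0`,
`∇Φ(x) ≠ 0` and `G x ≠ 0`, the matrix `M` is a matrix-valued dual density: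
`M_{ab}(G·Φ)(x) = G(x) · M_{ab}(Φ)(x)` for all `a, b`. -/
theorem stmt4 (n : ℕ) (Φ G : EuclideanSpace ℝ (Fin (n + 1)) → ℝ)
    (hΦ : ContDiff ℝ 2 Φ) (hG : ContDiff ℝ 2 G)
    (x : EuclideanSpace ℝ (Fin (n + 1))) (hx : Φ x = 0)
    (hgrad : gradient Φ x ≠ 0) (hGx : G x ≠ 0) :
    ∀ a b, Mmat (fun y => G y * Φ y) x a b = G x * Mmat Φ x a b := by
  intro a b
  have hN := aux_N Φ x hgrad
  have e1 (c) : pderiv1 (fun y => G y * Φ y) x c = G x * pderiv1 Φ x c := by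
    rw [aux_p1 Φ G hΦ hG, hx]; ring
  have e2 := aux_p2 Φ G hΦ hG x hx
  have s1 : ∑ d, pderiv2 (fun y => G y * Φ y) x d d
      = G x * ∑ d, pderiv2 Φ x d d + 2 * ∑ d, pderiv1 Φ x d * pderiv1 G x d := by
    rw [Finset.mul_sum, Finset.mul_sum, ← Finset.sum_add_distrib]
    exact Finset.sum_congr rfl fun d _ => by rw [e2]; ring
  have s2 : ∑ d, (pderiv1 (fun y => G y * Φ y) x d) ^ 2
      = G x ^ 2 * ∑ d, (pderiv1 Φ x d) ^ 2 := by
    rw [Finset.mul_sum]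
    exact Finset.sum_congr rfl fun d _ => by rw [e1]; ring
  have s3 (b) : ∑ d, pderiv1 (fun y => G y * Φ y) x d * pderiv2 (fun y => G y * Φ y) x d b
      = G x * (G x * ∑ d, pderiv1 Φ x d * pderiv2 Φ x d b
        + (∑ d, pderiv1 Φ x d * pderiv1 G x d) * pderiv1 Φ x b
        + (∑ d, (pderiv1 Φ x d) ^ 2) * pderiv1 G x b) := by
    simp only [Finset.mul_sum, Finset.sum_mul, ← Finset.sum_add_distrib]
    exact Finset.sum_congr rfl fun d _ => by rw [e1, e2]; ring
  simp only [Mmat, Matrix.of_apply]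
  rw [s1, s2, s3, s3, e1, e1, e2]
  generalize ∑ d, (pderiv1 Φ x d) ^ 2 = N at *
  field_simp
  ring
end
end

section
/- Let Φ : ℝ^{n+1} → ℝ be a C² function and x ∈ ℝ^{n+1} a point where ∇Φ(x) = e_{n+1}. Then for every t ∈ ℝ, det(I_{n+1} + t·M(Φ)(x)) = (1 + t·A_mcurv(Φ)(x)) · det(I_n + t·B), where B is the n×n matrix with entries B_{ij} = -∂_i∂_jΦ(x) for 1 ≤ i, j ≤ n, and A_mcurv(Φ)(x) = trace(B). -/
noncomputable section

/-- If `Φ : ℝ^{n+1} → ℝ` is C² and `∇Φ(x) = e_{n+1}` (adjusted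
coordinates), then with `B` the `n×n` matrix `B_{ij} = -∂ᵢ∂ⱼΦ(x)` one has
`A_mcurv(Φ)(x) = trace B` and, for every `t ∈ ℝ`,
`det(I_{n+1} + t·M(Φ)(x)) = (1 + t·A_mcurv(Φ)(x)) · det(I_n + t·B)`. -/
theorem stmt7 (n : ℕ) (Φ : EuclideanSpace ℝ (Fin (n + 1)) → ℝ)
    (hΦ : ContDiff ℝ 2 Φ)
    (x : EuclideanSpace ℝ (Fin (n + 1)))
    (hgrad : gradient Φ x = EuclideanSpace.single (Fin.last n) 1)
    (B : Matrix (Fin n) (Fin n) ℝ)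
    (hB : B = Matrix.of fun i j => -pderiv2 Φ x i.castSucc j.castSucc) :
    Amcurv Φ x = B.trace ∧
    ∀ t : ℝ, (1 + t • Mmat Φ x).det = (1 + t * Amcurv Φ x) * (1 + t • B).det := by
  have h1 : ∀ a, pderiv1 Φ x a = if a = Fin.last n then 1 else 0 := by
    intro a
    have h : inner ℝ (gradient Φ x) (EuclideanSpace.single a (1 : ℝ)) = pderiv1 Φ x a := by
      unfold gradient pderiv1
      exact InnerProductSpace.toDual_symm_apply
    rw [← h, hgrad, EuclideanSpace.inner_single_left]
    simp [Pi.single_apply, eq_comm]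
  have hA : Amcurv Φ x = B.trace := by
    subst hB
    simp [Amcurv, h1, Matrix.trace, Fin.sum_univ_castSucc (n := n), Fin.castSucc_ne_last]
  refine ⟨hA, fun t => ?_⟩
  have hrow : ∀ b, Mmat Φ x (Fin.last n) b = if b = Fin.last n then Amcurv Φ x else 0 := by
    intro b
    by_cases hb : b = Fin.last n
    · subst hb
      simp [Mmat, Amcurv, h1]
      ring
    · simp [Mmat, h1, hb]
  have hsub : (1 + t • Mmat Φ x).submatrix Fin.castSucc Fin.castSucc = 1 + t • B := by
    subst hB
    ext i j
    simp [Mmat, h1, Fin.castSucc_ne_last, Matrix.one_apply]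
  rw [Matrix.det_succ_row _ (Fin.last n), Finset.sum_eq_single (Fin.last n)]
  · have e : (Fin.last n).succAbove = Fin.castSucc := by
      ext i; simp
    rw [e, hsub]
    simp [hrow, ← two_mul]
  · intro b _ hb
    simp [hrow, hb, Matrix.one_apply, Ne.symm hb]
  · simp
end
end

section
/- Let V be a finite-dimensional vector space over a field K, let f : V → V and A : V → V be linear operators with A ∘ f = f ∘ A. Then f induces a linear isomorphism from V/ker(f) onto range(f) intertwining the operator induced by A on V/ker(f) with the restriction of A to range(f), and consequently det(1 + t·A) = det(1 + t·A|_{ker f}) · det(1 + t·A|_{range f}) for every t ∈ K. -/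
open LinearMap Submodule

/-- If `f` and `A` are commuting linear operators on a finite-dimensional
vector space `V` over a field `K`, then `ker f` and `range f` are `A`-invariant, the
isomorphism `V ⧸ ker f ≃ range f` induced by `f` intertwines the operator induced by
`A` on `V ⧸ ker f` with the restriction of `A` to `range f`, and consequently
`det(1 + t·A) = det(1 + t·A|_{ker f}) · det(1 + t·A|_{range f})` for every `t ∈ K`. -/
theorem stmt11 {K V : Type*} [Field K] [AddCommGroup V] [Module K V]
    [FiniteDimensional K V]
    (f A : V →ₗ[K] V) (hcomm : A ∘ₗ f = f ∘ₗ A) :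
    ∃ (hker : ∀ x ∈ ker f, A x ∈ ker f) (hrange : ∀ x ∈ range f, A x ∈ range f),
      (∀ v : V ⧸ ker f,
          f.quotKerEquivRange (Submodule.mapQ (ker f) (ker f) A
            (fun x hx => hker x hx) v) =
          A.restrict hrange (f.quotKerEquivRange v)) ∧
      ∀ t : K, LinearMap.det (1 + t • A) =
          LinearMap.det (1 + t • A.restrict hker) *
            LinearMap.det (1 + t • A.restrict hrange) := by
  have hc : ∀ x, A (f x) = f (A x) := fun x => LinearMap.congr_fun hcomm x
  have hker : ∀ x ∈ ker f, A x ∈ ker f := by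
    intro x hx
    rw [LinearMap.mem_ker] at hx ⊢
    rw [← hc, hx, map_zero]
  have hrange : ∀ x ∈ range f, A x ∈ range f := by
    rintro _ ⟨y, rfl⟩
    exact ⟨A y, (hc y).symm⟩
  have key : ∀ v : V ⧸ ker f,
      f.quotKerEquivRange (Submodule.mapQ (ker f) (ker f) A
        (fun x hx => hker x hx) v) =
      A.restrict hrange (f.quotKerEquivRange v) := by
    intro v
    obtain ⟨x, rfl⟩ := Submodule.Quotient.mk_surjective _ v
    apply Subtype.ext
    exact (hc x).symm
  refine ⟨hker, hrange, key, fun t => ?_⟩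
  have he : ker f ≤ (ker f).comap (1 + t • A) := fun x hx =>
    (ker f).add_mem hx ((ker f).smul_mem t (hker x hx))
  rw [LinearMap.det_eq_det_mul_det (ker f) (1 + t • A) he]
  congr 1
  rw [← LinearMap.det_conj _ f.quotKerEquivRange]
  congr 1
  apply LinearMap.ext
  intro w
  obtain ⟨v, rfl⟩ := f.quotKerEquivRange.surjective w
  have h : (ker f).mapQ (ker f) (1 + t • A) he v =
      v + t • Submodule.mapQ (ker f) (ker f) A (fun x hx => hker x hx) v := by
    obtain ⟨x, rfl⟩ := Submodule.Quotient.mk_surjective _ v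
    rfl
  simp only [LinearMap.comp_apply, LinearEquiv.coe_coe, LinearEquiv.symm_apply_apply]
  rw [h, map_add, map_smul, key]
  rfl
end

section
/- Let E₀, E₁ be finite-dimensional vector spaces over a field K, let d : E₀ → E₁ be a linear map, and let A₀ : E₀ → E₀, A₁ : E₁ → E₁ be linear operators with A₁ ∘ d = d ∘ A₀. Then ker(d) is A₀-invariant, range(d) is A₁-invariant, A₁ induces an operator on the cokernel E₁/range(d), and for every t ∈ K: det(1 + t·A₀|_{E₀}) · det(1 + t·Ā₁) = det(1 + t·A₀|_{ker d}) · det(1 + t·A₁|_{E₁}), where Ā₁ is the operator induced by A₁ on E₁/range(d). Equivalently, det(1 + tA₀|_{E₀})/det(1 + tA₁|_{E₁}) = det(1 + tA₀|_{ker d})/det(1 + tĀ₁). -/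
open LinearMap Submodule

/-- For a two-term complex, i.e. a linear map `d : E₀ → E₁` of
finite-dimensional vector spaces over a field `K`, and operators `A₀, A₁` with
`A₁ ∘ d = d ∘ A₀`: `ker d` is `A₀`-invariant, `range d` is `A₁`-invariant, `A₁`
induces an operator `Ā₁` on the cokernel `E₁ ⧸ range d`, and for every `t ∈ K`,
`det(1 + t·A₀) · det(1 + t·Ā₁) = det(1 + t·A₀|_{ker d}) · det(1 + t·A₁)`. -/
theorem stmt13 {K E₀ E₁ : Type*} [Field K]
    [AddCommGroup E₀] [Module K E₀] [FiniteDimensional K E₀]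
    [AddCommGroup E₁] [Module K E₁] [FiniteDimensional K E₁]
    (d : E₀ →ₗ[K] E₁) (A₀ : E₀ →ₗ[K] E₀) (A₁ : E₁ →ₗ[K] E₁)
    (hcomm : A₁ ∘ₗ d = d ∘ₗ A₀) :
    ∃ (hker : ∀ x ∈ ker d, A₀ x ∈ ker d) (hrange : ∀ x ∈ range d, A₁ x ∈ range d),
      ∀ t : K,
        LinearMap.det (1 + t • A₀) *
            LinearMap.det (1 + t • Submodule.mapQ (range d) (range d) A₁
              (fun x hx => hrange x hx)) =
          LinearMap.det (1 + t • A₀.restrict hker) * LinearMap.det (1 + t • A₁) := by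
  have hc : ∀ x, A₁ (d x) = d (A₀ x) := fun x => LinearMap.congr_fun hcomm x
  have hker : ∀ x ∈ ker d, A₀ x ∈ ker d := by
    intro x hx
    rw [LinearMap.mem_ker] at hx ⊢
    rw [← hc, hx, map_zero]
  have hrange : ∀ x ∈ range d, A₁ x ∈ range d := by
    rintro _ ⟨y, rfl⟩
    exact ⟨A₀ y, (hc y).symm⟩
  refine ⟨hker, hrange, fun t => ?_⟩
  have h0 : ∀ x ∈ ker d, (1 + t • A₀) x ∈ ker d := fun x hx =>
    (ker d).add_mem hx ((ker d).smul_mem t (hker x hx))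
  have h1 : ∀ x ∈ range d, (1 + t • A₁) x ∈ range d := fun x hx =>
    (range d).add_mem hx ((range d).smul_mem t (hrange x hx))
  have e0 := LinearMap.det_eq_det_mul_det (ker d) (1 + t • A₀) h0
  have e1 := LinearMap.det_eq_det_mul_det (range d) (1 + t • A₁) h1
  have r0 : (1 + t • A₀).restrict h0 = 1 + t • A₀.restrict hker := by
    ext x; rfl
  have q1 : Submodule.mapQ (range d) (range d) (1 + t • A₁) h1 =
      1 + t • Submodule.mapQ (range d) (range d) A₁ (fun x hx => hrange x hx) := by
    ext x; rfl
  have key : LinearMap.det ((1 + t • A₁).restrict h1) =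
      LinearMap.det (Submodule.mapQ (ker d) (ker d) (1 + t • A₀) h0) := by
    rw [← LinearMap.det_conj (Submodule.mapQ (ker d) (ker d) (1 + t • A₀) h0)
      d.quotKerEquivRange]
    congr 1
    ext ⟨_, y, rfl⟩
    have : d.quotKerEquivRange.symm ⟨d y, y, rfl⟩ = (ker d).mkQ y := by
      rw [LinearEquiv.symm_apply_eq]; rfl
    simp only [LinearMap.comp_apply, LinearEquiv.coe_coe]
    rw [this, Submodule.mkQ_apply, Submodule.mapQ_apply, LinearMap.quotKerEquivRange_apply_mk]
    simp [hc]
  rw [e0, e1, r0, q1, key]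
  ring
end

section
/- Let K be a field and let (E•, d) be a cochain complex of finite-dimensional K-vector spaces indexed by the natural numbers, with E^i = 0 for all sufficiently large i. Let A• be an endomorphism of the complex, i.e. linear maps A_i : E^i → E^i with A_{i+1} ∘ d_i = d_i ∘ A_i for all i. Let H^i denote the i-th cohomology ker(d_i)/range(d_{i-1}) and let A induce operators Â_i on H^i. Then in the field of rational functions K(t): ∏_i det(1 + t·A_i)^{(-1)^i} = ∏_i det(1 + t·Â_i)^{(-1)^i}, both products being finite. -/
open LinearMap Submodule Polynomial

noncomputable section

/-- The characteristic function `det(1 + t·A)` of a linear operator `A` on a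
finite-dimensional `K`-vector space, regarded as an element of the field of rational
functions `K(t)`: it is the determinant, over the polynomial ring `K[t]`, of
`1 + t·A` acting on the base change `K[t] ⊗ V`, mapped into `K(t)`. -/
def charFun {K V : Type*} [Field K] [AddCommGroup V] [Module K V]
    [FiniteDimensional K V] (A : V →ₗ[K] V) : RatFunc K :=
  algebraMap (Polynomial K) (RatFunc K)
    (LinearMap.det (1 + (Polynomial.X : Polynomial K) • A.baseChange (Polynomial K)))

/-- The subspace of `i`-coboundaries of a cochain complex
`E⁰ → E¹ → E² → ⋯` (indexed by `ℕ`): `⊥` for `i = 0` and `range (d (i-1))` otherwise. -/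
def coboundaries {K : Type*} [Field K] (E : ℕ → Type*)
    [∀ i, AddCommGroup (E i)] [∀ i, Module K (E i)]
    (d : ∀ i, E i →ₗ[K] E (i + 1)) : ∀ i, Submodule K (E i)
  | 0 => ⊥
  | (i + 1) => range (d i)

theorem charFun_eq {K V : Type*} [Field K] [AddCommGroup V] [Module K V]
    [FiniteDimensional K V] (A : V →ₗ[K] V) {ι : Type*} [Fintype ι] [DecidableEq ι]
    (b : Module.Basis ι K V) :
    charFun A = algebraMap (Polynomial K) (RatFunc K)
      (Matrix.det (1 + (X : K[X]) • (LinearMap.toMatrix b b A).map C)) := by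
  unfold charFun
  rw [← LinearMap.det_toMatrix (Algebra.TensorProduct.basis K[X] b)]
  congr 2
  rw [map_add, map_smul, LinearMap.toMatrix_baseChange, LinearMap.toMatrix_one]
  rfl

theorem charFun_ne_zero {K V : Type*} [Field K] [AddCommGroup V] [Module K V]
    [FiniteDimensional K V] (A : V →ₗ[K] V) : charFun A ≠ 0 := by
  classical
  rw [charFun_eq A (Module.finBasis K V)]
  intro h
  rw [map_eq_zero_iff _ (RatFunc.algebraMap_injective K)] at h
  have h2 := Matrix.eval_charpolyRev (M := -(LinearMap.toMatrix (Module.finBasis K V) (Module.finBasis K V) A))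
  have h3 : (-(LinearMap.toMatrix (Module.finBasis K V) (Module.finBasis K V) A)).map C =
      - (LinearMap.toMatrix (Module.finBasis K V) (Module.finBasis K V) A).map C := by
    ext i j; simp
  rw [Matrix.charpolyRev, h3, smul_neg, sub_neg_eq_add, h] at h2
  simp at h2

theorem charFun_conj {K V W : Type*} [Field K] [AddCommGroup V] [Module K V]
    [FiniteDimensional K V] [AddCommGroup W] [Module K W]
    [FiniteDimensional K W] (A : V →ₗ[K] V) (B : W →ₗ[K] W) (e : V ≃ₗ[K] W)
    (h : ∀ x, e (A x) = B (e x)) : charFun A = charFun B := by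
  classical
  rw [charFun_eq A (Module.finBasis K V), charFun_eq B ((Module.finBasis K V).map e)]
  congr 4
  ext i j
  simp [LinearMap.toMatrix_apply, ← h]

theorem charFun_subsingleton {K V : Type*} [Field K] [AddCommGroup V] [Module K V]
    [FiniteDimensional K V] [Subsingleton V] (A : V →ₗ[K] V) : charFun A = 1 := by
  rw [charFun_eq A (Module.Basis.empty V : Module.Basis Empty K V)]
  simp

open Module Module.Basis in
theorem charFun_mul {K V : Type*} [Field K] [AddCommGroup V] [Module K V]
    [FiniteDimensional K V] (W : Submodule K V) (e : V →ₗ[K] V) (he : W ≤ W.comap e) :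
    charFun e = charFun (e.restrict he) * charFun (W.mapQ W e he) := by
  classical
  let bW := Module.finBasis K W
  let bQ := Module.finBasis K (V ⧸ W)
  let b := sumQuot bW bQ
  let A := LinearMap.toMatrix bW bW (e.restrict he)
  let B : Matrix (Fin (finrank K W)) (Fin (finrank K (V ⧸ W))) K := Matrix.of fun i l ↦
    ((sumQuot bW bQ).repr (e ((sumQuot bW bQ) (Sum.inr l)))) (Sum.inl i)
  let D := LinearMap.toMatrix bQ bQ (W.mapQ W e he)
  have key : LinearMap.toMatrix b b e = Matrix.fromBlocks A B 0 D := by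
    ext u v
    cases u with
    | inl i =>
      cases v with
      | inl k =>
        simp only [b, sumQuot_inl, Matrix.fromBlocks_apply₁₁, A, LinearMap.toMatrix_apply]
        apply sumQuot_repr_inl_of_mem
      | inr l => simp [b, LinearMap.toMatrix_apply, Matrix.fromBlocks_apply₁₂, B]
    | inr j =>
      cases v with
      | inl k =>
        suffices W.mkQ (e (bW k)) = 0 by simp [LinearMap.toMatrix_apply, b, this]
        rw [← LinearMap.mem_ker, Submodule.ker_mkQ]
        exact he (Submodule.coe_mem (bW k))
      | inr l =>
        simp only [LinearMap.toMatrix_apply, sumQuot_repr_inr, Matrix.fromBlocks_apply₂₂, b, D]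
        rw [← sumQuot_inr bW bQ l]
        rfl
  rw [charFun_eq e b, charFun_eq _ bW, charFun_eq _ bQ, ← map_mul, key]
  congr 1
  rw [Matrix.fromBlocks_map, Matrix.fromBlocks_smul, ← Matrix.fromBlocks_one,
    Matrix.fromBlocks_add]
  have h0 : (0 : Matrix (Fin (finrank K (V ⧸ W))) (Fin (finrank K W)) K[X]) +
      (X : K[X]) • (0 : Matrix (Fin (finrank K (V ⧸ W))) (Fin (finrank K W)) K).map C = 0 := by
    ext i j; simp
  rw [h0, Matrix.det_fromBlocks_zero₂₁]

/-- Let `(E•, d)` be a cochain complex of finite-dimensional `K`-vector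
spaces indexed by `ℕ`, with `E^i = 0` for all `i ≥ N`, and let `A•` be an endomorphism
of the complex. With `H^i = ker (d i) ⧸ coboundaries i` the `i`-th cohomology and `Â_i`
the induced operators, the alternating products of characteristic functions in `K(t)`
agree: `∏ᵢ det(1 + t·A_i)^{(-1)^i} = ∏ᵢ det(1 + t·Â_i)^{(-1)^i}` (finite products). -/
theorem stmt14 {K : Type*} [Field K] (E : ℕ → Type*)
    [∀ i, AddCommGroup (E i)] [∀ i, Module K (E i)] [∀ i, FiniteDimensional K (E i)]
    (d : ∀ i, E i →ₗ[K] E (i + 1)) (hdd : ∀ i, d (i + 1) ∘ₗ d i = 0)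
    (A : ∀ i, E i →ₗ[K] E i) (hA : ∀ i, A (i + 1) ∘ₗ d i = d i ∘ₗ A i)
    (N : ℕ) (hN : ∀ i, N ≤ i → Subsingleton (E i)) :
    ∃ (hZ : ∀ i, ∀ x ∈ ker (d i), A i x ∈ ker (d i))
      (hq : ∀ i, (coboundaries E d i).comap (ker (d i)).subtype ≤
          ((coboundaries E d i).comap (ker (d i)).subtype).comap
            ((A i).restrict (hZ i))),
      ∀ M : ℕ, N ≤ M →
        ∏ i ∈ Finset.range M, charFun (A i) ^ ((-1 : ℤ) ^ i) =
          ∏ i ∈ Finset.range M,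
            charFun (Submodule.mapQ
              ((coboundaries E d i).comap (ker (d i)).subtype)
              ((coboundaries E d i).comap (ker (d i)).subtype)
              ((A i).restrict (hZ i)) (hq i)) ^ ((-1 : ℤ) ^ i) := by
  have hA' : ∀ i x, A (i + 1) (d i x) = d i (A i x) := fun i x => LinearMap.congr_fun (hA i) x
  have hZ : ∀ i, ∀ x ∈ ker (d i), A i x ∈ ker (d i) := by
    intro i x hx
    rw [LinearMap.mem_ker] at hx ⊢
    rw [← hA', hx, map_zero]
  have hB : ∀ i, coboundaries E d i ≤ (coboundaries E d i).comap (A i) := by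
    intro i
    cases i with
    | zero => exact bot_le
    | succ i =>
      rintro _ ⟨y, rfl⟩
      exact ⟨A i y, (hA' i y).symm⟩
  have hBZ : ∀ i, coboundaries E d i ≤ ker (d i) := by
    intro i
    cases i with
    | zero => exact bot_le
    | succ i =>
      rintro _ ⟨y, rfl⟩
      exact LinearMap.congr_fun (hdd i) y
  have hq : ∀ i, (coboundaries E d i).comap (ker (d i)).subtype ≤
          ((coboundaries E d i).comap (ker (d i)).subtype).comap
            ((A i).restrict (hZ i)) := fun i x hx => hB i hx
  refine ⟨hZ, hq, ?_⟩
  set b : ℕ → RatFunc K := fun i => charFun ((A i).restrict (hB i)) with hb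
  set h : ℕ → RatFunc K := fun i => charFun (Submodule.mapQ
              ((coboundaries E d i).comap (ker (d i)).subtype)
              ((coboundaries E d i).comap (ker (d i)).subtype)
              ((A i).restrict (hZ i)) (hq i)) with hh
  have h1 : ∀ i, charFun ((A i).restrict (hZ i)) = b i * h i := by
    intro i
    rw [charFun_mul _ _ (hq i)]
    congr 1
    exact charFun_conj _ _ (Submodule.comapSubtypeEquivOfLe (hBZ i)) (fun x => rfl)
  have h2 : ∀ i, charFun (A i) = b i * h i * b (i + 1) := by
    intro i
    rw [charFun_mul (ker (d i)) (A i) (hZ i), ← h1]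
    congr 1
    refine charFun_conj _ _ (d i).quotKerEquivRange ?_
    intro x
    obtain ⟨x, rfl⟩ := Submodule.Quotient.mk_surjective _ x
    apply Subtype.ext
    exact (hA' i x).symm
  have hb0 : ∀ i, b i ≠ 0 := fun i => charFun_ne_zero _
  have key : ∀ M : ℕ, (∏ i ∈ Finset.range M, charFun (A i) ^ ((-1 : ℤ) ^ i)) *
      b M ^ ((-1 : ℤ) ^ M) = ∏ i ∈ Finset.range M, h i ^ ((-1 : ℤ) ^ i) := by
    intro M
    induction M with
    | zero =>
      have : Subsingleton (coboundaries E d 0) :=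
        inferInstanceAs (Subsingleton (⊥ : Submodule K (E 0)))
      have : b 0 = 1 := charFun_subsingleton _
      simp [this]
    | succ M ih =>
      rw [Finset.prod_range_succ, Finset.prod_range_succ, ← ih, h2 M, mul_zpow, mul_zpow,
        pow_succ, mul_neg_one, zpow_neg]
      have := zpow_ne_zero ((-1 : ℤ) ^ M) (hb0 (M + 1))
      field_simp
  intro M hM
  have := hN M hM
  have hbM : b M = 1 := charFun_subsingleton _
  have hk := key M
  rw [hbM, one_zpow, mul_one] at hk
  exact hk
end
end
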